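/- Let A be a C*-algebra, Y a locally compact Hausdorff space, φ : C₀(Y) → M(A) a *-homomorphism into the multiplier algebra of A, and U ⊆ Y open. Let A_U be the closed linear span of { a·φ(f) | a ∈ A, f ∈ C₀(Y) with f vanishing on Y \ U } and let _U A be the closed linear span of { φ(f)·a | a ∈ A, f ∈ C₀(Y) with f vanishing on Y \ U }. Then (A_U)* = _U A, and the intersection _U A ∩ A_U is a hereditary C*-subalgebra of A: it is a closed *-subalgebra B such that whenever 0 ≤ x ≤ b with x ∈ A and b ∈ B, one has x ∈ B. -/

import Mathlib

open scoped ZeroAtInfty MultiplierAlgebra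

/-!
`A_U` is a closed left ideal and `_U A` is its adjoint, so everything rests on the classical fact
that `L ∩ L*` is a hereditary C*-subalgebra for every closed left ideal `L`. If `0 ≤ x ≤ b` with
`b ∈ L ∩ L*`, choose `u ∈ L ∩ L*` with `√b * u` close to `√b`. Comparing `x` with `b` in the
unitization gives `‖√x - √x * u‖ ≤ ‖√b - √b * u‖`, so `√x` is a limit of elements `√x * u` of `L`,
whence `√x ∈ L` and `x = √x * √x ∈ L`.
-/

open scoped CStarAlgebra
open Pointwise

section CStarAlgebra

variable {A : Type*} [NonUnitalCStarAlgebra A]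

theorem mem_closure_image_mul_left_of_mem_starSubalgebra {B : NonUnitalStarSubalgebra ℂ A}
    (hB : IsClosed (B : Set A)) {y : A} (hy : y ∈ B) :
    y ∈ closure ((y * ·) '' (B : Set A)) := by
  let _ : PartialOrder B := CStarAlgebra.spectralOrder B
  have _ : StarOrderedRing B := CStarAlgebra.spectralOrderedRing B
  have hlim := (CStarAlgebra.increasingApproximateUnit B).tendsto_mul_left ⟨y, hy⟩
  exact mem_closure_of_tendsto ((continuous_subtype_val.tendsto _).comp hlim)
    (.of_forall fun u ↦ ⟨u, u.2, rfl⟩)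

variable [PartialOrder A] [StarOrderedRing A]

theorem norm_mul_le_norm_mul_of_star_mul_self_le {s t : A} (h : star s * s ≤ star t * t) (v : A) :
    ‖s * v‖ ≤ ‖t * v‖ := by
  have hconj : star (s * v) * (s * v) ≤ star (t * v) * (t * v) := by
    simpa only [star_mul, mul_assoc] using star_left_conjugate_le_conjugate h v
  rw [← sq_le_sq₀ (norm_nonneg _) (norm_nonneg _), sq, sq, ← CStarRing.norm_star_mul_self,
    ← CStarRing.norm_star_mul_self]
  exact CStarAlgebra.norm_le_norm_of_nonneg_of_le (star_mul_self_nonneg _) hconj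

theorem norm_sub_mul_le_norm_sub_mul_of_star_mul_self_le {s t : A}
    (h : star s * s ≤ star t * t) (u : A) : ‖s - s * u‖ ≤ ‖t - t * u‖ := by
  have hinr : star (s : A⁺¹) * s ≤ star (t : A⁺¹) * t := by
    simpa only [Unitization.inr_mul, Unitization.inr_star] using
      (Unitization.inr_le_iff _ _ (.star_mul_self s) (.star_mul_self t)).mpr h
  simpa only [mul_sub, mul_one, ← Unitization.inr_mul, ← Unitization.inr_sub,
    Unitization.norm_inr] using norm_mul_le_norm_mul_of_star_mul_self_le hinr (1 - (u : A⁺¹))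

end CStarAlgebra

section LeftIdeal

variable {R A : Type*} [CommSemiring R] [StarRing R] [NonUnitalSemiring A] [StarRing A] [Module R A]
  [StarModule R A] {L : Submodule R A}

/-- The *-subalgebra `L ∩ L*` attached to a left ideal `L`, encoded as a subspace `L` together with
the proof that it absorbs multiplication from the left. If `L` is a closed left ideal of a
C*-algebra, this is the hereditary C*-subalgebra corresponding to `L`. -/
def leftIdealInterStar (L : Submodule R A) (hL : ∀ a, ∀ y ∈ L, a * y ∈ L) :
    NonUnitalStarSubalgebra R A where
  carrier := L ∩ star (L : Set A)
  add_mem' hx hy := ⟨add_mem hx.1 hy.1, by simpa using add_mem hx.2 hy.2⟩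
  zero_mem' := ⟨zero_mem L, by simp⟩
  mul_mem' {x y} hx hy := ⟨hL x y hy.1, by simpa using hL (star y) (star x) hx.2⟩
  smul_mem' c x hx := ⟨L.smul_mem c hx.1, by simpa using L.smul_mem (star c) hx.2⟩
  star_mem' hx := ⟨hx.2, by simpa using hx.1⟩

theorem isClosed_leftIdealInterStar [TopologicalSpace A] [ContinuousStar A]
    (hL : ∀ a, ∀ y ∈ L, a * y ∈ L) (hLc : IsClosed (L : Set A)) :
    IsClosed (leftIdealInterStar L hL : Set A) :=
  hLc.inter (hLc.preimage continuous_star)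

theorem mem_leftIdealInterStar_of_nonneg_of_le {A : Type*} [NonUnitalCStarAlgebra A]
    [PartialOrder A] [StarOrderedRing A] {L : Submodule ℂ A}
    (hL : ∀ a, ∀ y ∈ L, a * y ∈ L) (hLc : IsClosed (L : Set A)) {x b : A}
    (hb : b ∈ leftIdealInterStar L hL) (hx : 0 ≤ x) (hxb : x ≤ b) :
    x ∈ leftIdealInterStar L hL := by
  have hB := isClosed_leftIdealInterStar hL hLc
  have hsqrt_b : CFC.sqrt b ∈ leftIdealInterStar L hL := by
    rw [CFC.sqrt_eq_real_sqrt b (hx.trans hxb)]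
    exact cfcₙ_mem _ hb
  have hle : star (CFC.sqrt x) * CFC.sqrt x ≤ star (CFC.sqrt b) * CFC.sqrt b := by
    rwa [(CFC.sqrt_nonneg x).star_eq, (CFC.sqrt_nonneg b).star_eq, CFC.sqrt_mul_sqrt_self x hx,
      CFC.sqrt_mul_sqrt_self b (hx.trans hxb)]
  have hsqrt_x : CFC.sqrt x ∈ L := by
    refine hLc.closure_subset (Metric.mem_closure_iff.mpr fun ε hε ↦ ?_)
    obtain ⟨_, ⟨u, hu, rfl⟩, hdist⟩ :=
      Metric.mem_closure_iff.mp (mem_closure_image_mul_left_of_mem_starSubalgebra hB hsqrt_b) ε hε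
    refine ⟨CFC.sqrt x * u, hL _ u hu.1, ?_⟩
    rw [dist_eq_norm] at hdist ⊢
    exact (norm_sub_mul_le_norm_sub_mul_of_star_mul_self_le hle u).trans_lt hdist
  have hxL : x ∈ L := CFC.sqrt_mul_sqrt_self x hx ▸ hL _ _ hsqrt_x
  exact ⟨hxL, by rwa [Set.mem_star, hx.star_eq]⟩

end LeftIdeal

section ClosedSpan

variable {R A : Type*} [CommSemiring R] [TopologicalSpace A]

theorem mul_mem_topologicalClosure_span [NonUnitalSemiring A] [Module R A] [SMulCommClass R A A]
    [ContinuousAdd A] [ContinuousConstSMul R A] [SeparatelyContinuousMul A] {S : Set A}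
    (hS : ∀ a, ∀ z ∈ S, a * z ∈ S) (a : A) {x : A}
    (hx : x ∈ (Submodule.span R S).topologicalClosure) :
    a * x ∈ (Submodule.span R S).topologicalClosure :=
  map_mem_closure (continuous_const_mul a) hx
    (Submodule.mapsTo_span (f := LinearMap.mulLeft R a) (hS a))

theorem star_closure_span [StarRing R] [AddCommMonoid A] [StarAddMonoid A] [Module R A]
    [StarModule R A] [ContinuousStar A] (S : Set A) :
    star (closure (Submodule.span R S : Set A)) = closure (Submodule.span R (star S) : Set A) := by
  have hspan : star (Submodule.span R S : Set A) = Submodule.span R (star S) := by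
    rw [← Set.image_star, ← Set.image_star]
    exact congrArg SetLike.coe (Submodule.map_span (starLinearEquiv R (A := A)).toLinearMap S)
  rw [← hspan, ← Set.image_star, ← Set.image_star]
  exact (starL R : A ≃L⋆[R] A).toHomeomorph.image_closure _

end ClosedSpan

section Multiplier

variable {𝕜 A : Type*} [NontriviallyNormedField 𝕜] [NonUnitalNormedRing A] [NormedSpace 𝕜 A]
  [SMulCommClass 𝕜 A A] [IsScalarTower 𝕜 A A]

theorem doubleCentralizer_snd_mul [StarRing A] [CStarRing A] (m : 𝓜(𝕜, A)) (x y : A) :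
    m.snd (x * y) = x * m.snd y := by
  rw [← sub_eq_zero, ← CStarRing.mul_star_self_eq_zero_iff, sub_mul, m.central, mul_assoc,
    mul_assoc, m.central, sub_self]

/-- The closed linear span of the products `a·m` with `a ∈ A` and `m ∈ M`, for a set `M` of
multipliers; the product `a·m` is `m.snd a`. For `M = {φ(f) | f vanishes off U}` it is `A_U`. -/
def mulRightClosedSpan (M : Set 𝓜(𝕜, A)) : Submodule 𝕜 A :=
  (Submodule.span 𝕜 {z | ∃ a, ∃ m ∈ M, z = m.snd a}).topologicalClosure

/-- The closed linear span of the products `m·a` with `a ∈ A` and `m ∈ M`, for a set `M` of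
multipliers; the product `m·a` is `m.fst a`. For `M = {φ(f) | f vanishes off U}` it is `_U A`. -/
def mulLeftClosedSpan (M : Set 𝓜(𝕜, A)) : Submodule 𝕜 A :=
  (Submodule.span 𝕜 {z | ∃ a, ∃ m ∈ M, z = m.fst a}).topologicalClosure

variable [StarRing A] {M : Set 𝓜(𝕜, A)}

theorem mul_mem_mulRightClosedSpan [CStarRing A] (a : A) {x : A} (hx : x ∈ mulRightClosedSpan M) :
    a * x ∈ mulRightClosedSpan M := by
  refine mul_mem_topologicalClosure_span ?_ a hx
  rintro b _ ⟨c, m, hm, rfl⟩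
  exact ⟨b * c, m, hm, (doubleCentralizer_snd_mul m b c).symm⟩

theorem star_mulRightClosedSpan [StarRing 𝕜] [NormedStarGroup A] [StarModule 𝕜 A]
    (hM : ∀ m ∈ M, star m ∈ M) :
    star (mulRightClosedSpan M : Set A) = mulLeftClosedSpan M := by
  have hproducts : star {z : A | ∃ a, ∃ m ∈ M, z = m.snd a} = {z | ∃ a, ∃ m ∈ M, z = m.fst a} := by
    ext z
    constructor
    · rintro ⟨a, m, hm, hz⟩
      exact ⟨star a, star m, hM m hm, by simp [← hz]⟩
    · rintro ⟨a, m, hm, rfl⟩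
      exact ⟨star a, star m, hM m hm, by simp⟩
  simp only [mulRightClosedSpan, mulLeftClosedSpan, Submodule.topologicalClosure_coe,
    star_closure_span, hproducts]

theorem star_mem_image_vanishing {Y B F : Type*} [TopologicalSpace Y] [Star B]
    [FunLike F C₀(Y, ℂ) B] [StarHomClass F C₀(Y, ℂ) B] (φ : F) (S : Set Y) :
    ∀ m ∈ φ '' {f | ∀ t ∈ S, f t = 0}, star m ∈ φ '' {f | ∀ t ∈ S, f t = 0} := by
  rintro _ ⟨f, hf, rfl⟩
  exact ⟨star f, fun t ht ↦ by simp [hf t ht], map_star φ f⟩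

end Multiplier

theorem stmt8_general {A : Type*} [NonUnitalCStarAlgebra A] [PartialOrder A] [StarOrderedRing A]
    {M : Set 𝓜(ℂ, A)} (hM : ∀ m ∈ M, star m ∈ M) {AU UA : Set A}
    (hAU : AU = mulRightClosedSpan M) (hUA : UA = mulLeftClosedSpan M) :
    (star '' AU = UA) ∧
    IsClosed (UA ∩ AU) ∧
    (∀ x ∈ UA ∩ AU, star x ∈ UA ∩ AU) ∧
    (∀ x ∈ UA ∩ AU, ∀ y ∈ UA ∩ AU, x * y ∈ UA ∩ AU) ∧
    (∀ x ∈ UA ∩ AU, ∀ y ∈ UA ∩ AU, x + y ∈ UA ∩ AU) ∧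
    (∀ (c : ℂ), ∀ x ∈ UA ∩ AU, c • x ∈ UA ∩ AU) ∧
    (∀ x : A, ∀ b ∈ UA ∩ AU, 0 ≤ x → x ≤ b → x ∈ UA ∩ AU) := by
  have hstar : star '' AU = UA := by rw [Set.image_star, hAU, hUA, star_mulRightClosedSpan hM]
  have hL : ∀ a, ∀ y ∈ mulRightClosedSpan M, a * y ∈ mulRightClosedSpan M :=
    fun a _ ↦ mul_mem_mulRightClosedSpan a
  have hLc : IsClosed (mulRightClosedSpan M : Set A) := Submodule.isClosed_topologicalClosure _
  let B := leftIdealInterStar (mulRightClosedSpan M) hL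
  have hB : UA ∩ AU = B := by
    rw [← hstar, hAU, Set.image_star, Set.inter_comm]
    rfl
  rw [hB]
  exact ⟨hstar, isClosed_leftIdealInterStar hL hLc, fun _ ↦ star_mem,
    fun _ hx _ hy ↦ mul_mem hx hy, fun _ hx _ hy ↦ add_mem hx hy, fun c _ ↦ SMulMemClass.smul_mem c,
    fun _ _ ↦ mem_leftIdealInterStar_of_nonneg_of_le hL hLc⟩

/-- Let `φ : C₀(Y) → M(A)` be a *-homomorphism and `U ⊆ Y` open. With
`A_U` the closed span of `{a·φ(f) | f vanishes off U}` and `_U A` the closed span of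
`{φ(f)·a | f vanishes off U}`, one has `(A_U)* = _U A`, and `_U A ∩ A_U` is a hereditary
C*-subalgebra of `A`: closed, a *-subalgebra, and hereditary for the order. -/
theorem stmt8 (A : Type*) [NonUnitalCStarAlgebra A] [PartialOrder A] [StarOrderedRing A]
    (Y : Type*) [TopologicalSpace Y] [LocallyCompactSpace Y] [T2Space Y]
    (φ : C₀(Y, ℂ) →⋆ₙₐ[ℂ] 𝓜(ℂ, A)) (U : Set Y) (hU : IsOpen U)
    (AU UA : Set A)
    (hAU : AU = closure (Submodule.span ℂ
      {z : A | ∃ (a : A) (f : C₀(Y, ℂ)), (∀ t ∈ Uᶜ, f t = 0) ∧ z = (φ f).snd a} : Set A))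
    (hUA : UA = closure (Submodule.span ℂ
      {z : A | ∃ (a : A) (f : C₀(Y, ℂ)), (∀ t ∈ Uᶜ, f t = 0) ∧ z = (φ f).fst a} : Set A)) :
    -- `(A_U)* = _U A`
    (star '' AU = UA) ∧
    -- `B := _U A ∩ A_U` is a closed *-subalgebra ...
    IsClosed (UA ∩ AU) ∧
    (∀ x ∈ UA ∩ AU, star x ∈ UA ∩ AU) ∧
    (∀ x ∈ UA ∩ AU, ∀ y ∈ UA ∩ AU, x * y ∈ UA ∩ AU) ∧
    (∀ x ∈ UA ∩ AU, ∀ y ∈ UA ∩ AU, x + y ∈ UA ∩ AU) ∧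
    (∀ (c : ℂ), ∀ x ∈ UA ∩ AU, c • x ∈ UA ∩ AU) ∧
    -- ... which is hereditary
    (∀ x : A, ∀ b ∈ UA ∩ AU, 0 ≤ x → x ≤ b → x ∈ UA ∩ AU) := by
  exact stmt8_general (star_mem_image_vanishing φ Uᶜ) (by simpa [mulRightClosedSpan] using hAU)
    (by simpa [mulLeftClosedSpan] using hUA)
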